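/- Let K be a number field with ring of integers O_K. There exists a constant C_K > 0, depending only on K, such that for all real x ≥ 3, | Σ_{𝔭 : N(𝔭) ≤ x} 1/N(𝔭) − log log x | ≤ C_K, where the sum is over all prime ideals 𝔭 of O_K with N(𝔭) ≤ x (Mertens' estimate for number fields). -/

import Mathlib

set_option maxHeartbeats 1000000
set_option synthInstance.maxHeartbeats 1000000

open scoped Classical
open NumberField

/-!
Write `Z(s) = ∑ N(I)⁻ˢ` for the Dedekind zeta function and `P(s) = ∑ N(𝔭)⁻ˢ` for the prime zeta
function. The Euler product bounds `P(s) - log Z(s)` by `2 P(2)` for `s > 1`, and `Z` has a simple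
pole at `1`, so `P(s) = -log (s - 1) + O(1)` as `s → 1⁺`.

To pass to the truncated sum, let `δ = 1 / log x` and `t = N(𝔭)^(-δ) ∈ (0, 1]`, so that `N(𝔭) ≤ x`
if and only if `t ≥ 1/e`. Since `|1_{t ≥ 1/e} - t| ≤ 3 (t - t²)`, the sum over `N(𝔭) ≤ x` differs
from `P(1 + δ)` by at most `3 (P(1 + δ) - P(1 + 2δ))`. This is bounded because the two logarithmic
singularities cancel, while `P(1 + δ) = log log x + O(1)`. No Chebyshev-type bound on the number of
primes is needed.
-/

namespace Mertens

open Filter Topology Asymptotics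

section EulerProduct

variable {α F : Type*} [CommMonoidWithZero α] [Subsingleton αˣ] [NormedCommRing F]
  [CompleteSpace F] {f : α →*₀ F}

lemma tsum_indicator_forall_not_dvd_inter_dvd [IsCancelMulZero α] (hf : Summable (‖f ·‖))
    {S : Set α} (hS : ∀ q ∈ S, Prime q) {p : α} (hp : Prime p) (hpS : p ∉ S) :
    ∑' a, ({a | ∀ q ∈ S, ¬ q ∣ a} ∩ {a | p ∣ a}).indicator f a =
      f p * ∑' a, {a | ∀ q ∈ S, ¬ q ∣ a}.indicator f a := by
  have dvd_mul_iff {q : α} (hq : q ∈ S) (a : α) : q ∣ p * a ↔ q ∣ a := by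
    rw [(hS q hq).dvd_mul, prime_dvd_prime_iff_eq (hS q hq) hp]
    exact or_iff_right (ne_of_mem_of_not_mem hq hpS)
  have support_subset :
      Function.support (({a | ∀ q ∈ S, ¬ q ∣ a} ∩ {a | p ∣ a}).indicator f) ⊆
        Set.range (p * ·) := by
    intro a ha
    obtain ⟨b, rfl⟩ := (Set.mem_of_indicator_ne_zero ha).2
    exact ⟨b, rfl⟩
  rw [← (mul_right_injective₀ hp.ne_zero).tsum_eq support_subset,
    ← (hf.of_norm.indicator _).tsum_mul_left]
  refine tsum_congr fun a ↦ ?_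
  by_cases ha : ∀ q ∈ S, ¬ q ∣ a
  all_goals simp +contextual [dvd_mul_iff, ha]

-- Multiplying by `1 - f p` sieves out the multiples of `p`.
lemma prod_one_sub_mul_tsum [IsCancelMulZero α] (hf : Summable (‖f ·‖)) (S : Finset α)
    (hS : ∀ p ∈ S, Prime p) :
    (∏ p ∈ S, (1 - f p)) * ∑' a, f a = ∑' a, {a | ∀ p ∈ S, ¬ p ∣ a}.indicator f a := by
  induction S using Finset.induction with
  | empty => simp
  | insert p S hpS ih =>
    rw [Finset.forall_mem_insert] at hS
    have sum_dvd := tsum_indicator_forall_not_dvd_inter_dvd (S := ↑S) hf hS.2 hS.1 hpS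
    simp only [SetLike.mem_coe] at sum_dvd
    rw [Finset.prod_insert hpS, mul_assoc, ih hS.2, sub_mul, one_mul, ← sum_dvd,
      ← (hf.of_norm.indicator _).tsum_sub (hf.of_norm.indicator _)]
    refine tsum_congr fun a ↦ ?_
    by_cases ha : p ∣ a
    all_goals simp [Set.indicator_apply, ha]

lemma eventually_forall_prime_not_dvd_iff [UniqueFactorizationMonoid α] {a : α} (ha : a ≠ 0) :
    ∀ᶠ S : Finset {p : α // Prime p} in atTop, (∀ p ∈ S, ¬ p.1 ∣ a) ↔ a = 1 := by
  rcases eq_or_ne a 1 with rfl | ha₁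
  · exact .of_forall fun S ↦ iff_of_true (fun p _ ↦ p.2.not_dvd_one) rfl
  · obtain ⟨p, hp, hpa⟩ := WfDvdMonoid.exists_irreducible_factor (mt isUnit_iff_eq_one.mp ha₁) ha
    filter_upwards [eventually_ge_atTop {⟨p, hp.prime⟩}] with S hS
    exact iff_of_false (fun h ↦ h _ (Finset.singleton_subset_iff.mp hS) hpa) ha₁

theorem tendsto_prod_one_sub_mul_tsum [UniqueFactorizationMonoid α] (hf : Summable (‖f ·‖)) :
    Tendsto (fun S : Finset {p : α // Prime p} ↦ (∏ p ∈ S, (1 - f p)) * ∑' a, f a) atTop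
      (𝓝 1) := by
  have sieve (S : Finset {p : α // Prime p}) :
      (∏ p ∈ S, (1 - f p)) * ∑' a, f a = ∑' a, {a | ∀ p ∈ S, ¬ p.1 ∣ a}.indicator f a := by
    simpa using prod_one_sub_mul_tsum hf (S.map (.subtype Prime)) (by simp +contextual)
  have tsum_eq_one : ∑' a, ({1} : Set α).indicator f a = 1 := by
    rw [← tsum_subtype, tsum_singleton, map_one]
  simp_rw [sieve]
  rw [← tsum_eq_one]
  refine tendsto_tsum_of_dominated_convergence hf (fun a ↦ ?_)
    (.of_forall fun S a ↦ norm_indicator_le_norm_self f a)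
  refine tendsto_const_nhds.congr' ?_
  rcases eq_or_ne a 0 with rfl | ha
  · simp [Set.indicator_apply]
  · filter_upwards [eventually_forall_prime_not_dvd_iff ha] with S hS
    simp only [Set.indicator_apply, Set.mem_ofPred_eq, Set.mem_singleton_iff, hS]

end EulerProduct

lemma abs_log_one_sub_add_le {t : ℝ} (ht : |t| ≤ 1 / 2) : |Real.log (1 - t) + t| ≤ 2 * t ^ 2 := by
  calc |Real.log (1 - t) + t| ≤ t ^ 2 / (1 - |t|) := by
        simpa [add_comm] using Real.abs_log_sub_add_sum_range_le (ht.trans_lt one_half_lt_one) 1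
    _ ≤ 2 * t ^ 2 := by
        rw [div_le_iff₀ (by linarith)]
        nlinarith [mul_nonneg (sq_nonneg t) (sub_nonneg.mpr ht)]

theorem hasSum_log_one_sub_prime {α : Type*} [CommMonoidWithZero α] [Subsingleton αˣ]
    [UniqueFactorizationMonoid α] {f : α →*₀ ℝ} (hf : Summable f)
    (hf_ne_one : ∀ p, Prime p → f p ≠ 1) :
    HasSum (fun p : {p : α // Prime p} ↦ Real.log (1 - f p)) (-Real.log (∑' a, f a)) := by
  have euler := tendsto_prod_one_sub_mul_tsum hf.norm
  have tsum_ne_zero : ∑' a, f a ≠ 0 := by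
    intro h
    simp only [h, mul_zero] at euler
    exact zero_ne_one (tendsto_nhds_unique tendsto_const_nhds euler)
  have log_euler := (euler.log one_ne_zero).sub_const (Real.log (∑' a, f a))
  rw [Real.log_one, zero_sub] at log_euler
  refine log_euler.congr fun S ↦ ?_
  have one_sub_ne_zero : ∀ p ∈ S, 1 - f p ≠ 0 :=
    fun p _ ↦ sub_ne_zero.mpr (hf_ne_one p p.2).symm
  rw [Real.log_mul (Finset.prod_ne_zero_iff.mpr one_sub_ne_zero) tsum_ne_zero,
    Real.log_prod one_sub_ne_zero, add_sub_cancel_right]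

theorem abs_tsum_prime_sub_log_tsum_le {α : Type*} [CommMonoidWithZero α] [Subsingleton αˣ]
    [UniqueFactorizationMonoid α] {f : α →*₀ ℝ} (hf : Summable f)
    (hf_le : ∀ p, Prime p → |f p| ≤ 1 / 2) :
    |∑' p : {p : α // Prime p}, f p - Real.log (∑' a, f a)| ≤
      2 * ∑' p : {p : α // Prime p}, f p ^ 2 := by
  have hasSum_log := hasSum_log_one_sub_prime hf fun p hp h ↦ by
    have := hf_le p hp
    norm_num [h] at this
  have summable_prime : Summable fun p : {p : α // Prime p} ↦ f p := hf.subtype _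
  have summable_sq : Summable fun p : {p : α // Prime p} ↦ f p ^ 2 := by
    refine summable_prime.norm.of_nonneg_of_le (fun p ↦ sq_nonneg _) fun p ↦ ?_
    rw [Real.norm_eq_abs, ← sq_abs]
    nlinarith [hf_le p p.2, abs_nonneg (f p)]
  rw [sub_eq_neg_add, ← hasSum_log.tsum_eq, ← hasSum_log.summable.tsum_add summable_prime,
    ← tsum_mul_left]
  exact tsum_of_norm_bounded (summable_sq.mul_left 2).hasSum
    fun p ↦ Real.norm_eq_abs _ ▸ abs_log_one_sub_add_le (hf_le p p.2)

section LSeries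

variable {ι : Type*} {N : ι → ℕ} {s : ℝ}

lemma term_card_fiber_eq_tsum (hs : s ≠ 0) (n : ℕ) :
    LSeries.term (fun n ↦ (Nat.card {i // N i = n} : ℂ)) s n =
      ((∑' i : {i // N i = n}, (N i : ℝ) ^ (-s) : ℝ) : ℂ) := by
  have tsum_fiber : ∑' i : {i // N i = n}, (N i : ℝ) ^ (-s) =
      Nat.card {i // N i = n} * (n : ℝ) ^ (-s) := by
    rw [tsum_congr fun i : {i // N i = n} ↦ by rw [i.2], tsum_const, nsmul_eq_mul]
  rw [tsum_fiber]
  rcases eq_or_ne n 0 with rfl | hn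
  · simp [hs]
  · rw [LSeries.term_of_ne_zero hn, div_eq_mul_inv, ← Complex.cpow_neg]
    push_cast [Complex.ofReal_cpow n.cast_nonneg]
    rfl

lemma summable_rpow_neg_of_LSeriesSummable (hN : ∀ n, {i | N i = n}.Finite) (hs : s ≠ 0)
    (h : LSeriesSummable (fun n ↦ (Nat.card {i // N i = n} : ℂ)) s) :
    Summable fun i ↦ (N i : ℝ) ^ (-s) := by
  simp_rw [LSeriesSummable, funext (term_card_fiber_eq_tsum hs), Complex.summable_ofReal] at h
  rw [← (Equiv.sigmaFiberEquiv N).summable_iff]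
  refine (summable_sigma_of_nonneg fun _ ↦ Real.rpow_nonneg (Nat.cast_nonneg _) _).mpr
    ⟨fun n ↦ ?_, h⟩
  have : Finite {i // N i = n} := hN n
  exact .of_finite

lemma LSeries_card_fiber_eq_tsum (hs : s ≠ 0) (h : Summable fun i ↦ (N i : ℝ) ^ (-s)) :
    LSeries (fun n ↦ (Nat.card {i // N i = n} : ℂ)) s = ((∑' i, (N i : ℝ) ^ (-s) : ℝ) : ℂ) := by
  rw [LSeries, tsum_congr (term_card_fiber_eq_tsum hs), ← Complex.ofReal_tsum]
  exact congrArg _ (h.hasSum.tsum_fiberwise N).tsum_eq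

end LSeries

section DedekindZeta

variable (K : Type*) [Field K] [NumberField K]

lemma isBigO_sum_card_absNorm_eq :
    (fun n : ℕ ↦ ∑ k ∈ Finset.Icc 1 n, (Nat.card {I : Ideal (𝓞 K) // Ideal.absNorm I = k} : ℝ))
      =O[atTop] fun n ↦ (n : ℝ) ^ (1 : ℝ) := by
  have card_le_isBigO : (fun n : ℕ ↦ (Nat.card {I : Ideal (𝓞 K) // Ideal.absNorm I ≤ n} : ℝ))
      =O[atTop] fun n ↦ (n : ℝ) := by
    refine isBigO_of_div_tendsto_nhds ?_ _ <| by
      simpa only [Function.comp_def, Nat.cast_le] using!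
        (Ideal.tendsto_norm_le_div_atTop K).comp tendsto_natCast_atTop_atTop
    filter_upwards [eventually_ne_atTop 0] with n hn h
    exact absurd (Nat.cast_eq_zero.mp h) hn
  simp only [Real.rpow_one]
  refine (IsBigO.of_norm_le fun n ↦ ?_).trans card_le_isBigO
  rw [Real.norm_of_nonneg (by positivity), ← Nat.cast_sum, Nat.cast_le,
    ← Finset.card_preimage_eq_sum_card_image_eq fun k _ ↦ Ideal.finite_setOfPred_absNorm_eq k]
  refine Nat.card_mono (Ideal.finite_setOfPred_absNorm_le n) fun I hI ↦ ?_
  exact (Finset.mem_Icc.mp (Finset.mem_coe.mp (Set.mem_preimage.mp hI))).2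

theorem summable_absNorm_rpow_neg {s : ℝ} (hs : 1 < s) :
    Summable fun I : Ideal (𝓞 K) ↦ (Ideal.absNorm I : ℝ) ^ (-s) := by
  refine summable_rpow_neg_of_LSeriesSummable Ideal.finite_setOfPred_absNorm_eq (by positivity) ?_
  exact_mod_cast LSeriesSummable_of_sum_norm_bigO_and_nonneg (isBigO_sum_card_absNorm_eq K)
    (fun _ ↦ Nat.cast_nonneg _) zero_le_one (by simpa using hs)

theorem dedekindZeta_eq_tsum {s : ℝ} (hs : 1 < s) :
    dedekindZeta K s = ((∑' I : Ideal (𝓞 K), (Ideal.absNorm I : ℝ) ^ (-s) : ℝ) : ℂ) :=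
  LSeries_card_fiber_eq_tsum (by positivity) (summable_absNorm_rpow_neg K hs)

theorem tendsto_sub_one_mul_tsum_absNorm_rpow_neg :
    Tendsto (fun s : ℝ ↦ (s - 1) * ∑' I : Ideal (𝓞 K), (Ideal.absNorm I : ℝ) ^ (-s)) (𝓝[>] 1)
      (𝓝 (dedekindZeta_residue K)) := by
  rw [← tendsto_ofReal_iff]
  refine (tendsto_sub_one_mul_dedekindZeta_nhdsGT K).congr' ?_
  filter_upwards [self_mem_nhdsWithin] with s hs
  rw [dedekindZeta_eq_tsum K hs]
  push_cast
  rfl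

end DedekindZeta

section PrimeZeta

lemma two_le_absNorm_of_prime {R : Type*} [CommRing R] [IsDedekindDomain R] [Module.Free ℤ R]
    [Module.Finite ℤ R] {p : Ideal R} (hp : Prime p) : 2 ≤ Ideal.absNorm p := by
  have ne_zero : Ideal.absNorm p ≠ 0 := mt Ideal.absNorm_eq_zero_iff.mp hp.ne_zero
  have ne_one : Ideal.absNorm p ≠ 1 :=
    mt Ideal.absNorm_eq_one_iff.mp (Ideal.isPrime_of_prime hp).ne_top
  lia

lemma abs_rpow_neg_le_half {y s : ℝ} (hy : 2 ≤ y) (hs : 1 ≤ s) : |y ^ (-s)| ≤ 1 / 2 := by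
  calc |y ^ (-s)| = y ^ (-s) := abs_of_nonneg (by positivity)
    _ ≤ y ^ (-1 : ℝ) := Real.rpow_le_rpow_of_exponent_le (by linarith) (by linarith)
    _ = 1 / y := by rw [Real.rpow_neg_one, one_div]
    _ ≤ 1 / 2 := one_div_le_one_div_of_le two_pos hy

lemma rpow_neg_sq_le {y s : ℝ} (hy : 1 ≤ y) (hs : 1 ≤ s) : (y ^ (-s)) ^ 2 ≤ y ^ (-2 : ℝ) := by
  rw [← Real.rpow_mul_natCast (by positivity)]
  exact Real.rpow_le_rpow_of_exponent_le hy (by push_cast; linarith)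

/-- The completely multiplicative weight `I ↦ N(I)⁻ˢ` on the ideals, whose sum is the Dedekind
zeta function. The exponent must be nonzero for the zero ideal to have weight `0`, since
`0 ^ 0 = 1`. -/
noncomputable def absNormRpowNeg (R : Type*) [CommRing R] [IsDedekindDomain R] [Module.Free ℤ R]
    {s : ℝ} (hs : s ≠ 0) : Ideal R →*₀ ℝ where
  toFun I := (Ideal.absNorm I : ℝ) ^ (-s)
  map_zero' := by simp [hs]
  map_one' := by simp
  map_mul' I J := by
    rw [map_mul, Nat.cast_mul, Real.mul_rpow (Nat.cast_nonneg _) (Nat.cast_nonneg _)]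

variable (K : Type*) [Field K] [NumberField K]

/-- The prime zeta function `∑ N(𝔭)⁻ˢ` of a number field at a real argument. In the monoid of
ideals, `Prime p` excludes the zero ideal. -/
noncomputable def primeZeta (s : ℝ) : ℝ :=
  ∑' p : {p : Ideal (𝓞 K) // Prime p}, (Ideal.absNorm p.1 : ℝ) ^ (-s)

theorem abs_primeZeta_sub_log_tsum_le {s : ℝ} (hs : 1 < s) :
    |primeZeta K s - Real.log (∑' I : Ideal (𝓞 K), (Ideal.absNorm I : ℝ) ^ (-s))| ≤
      2 * primeZeta K 2 := by
  have two_le (p : {p : Ideal (𝓞 K) // Prime p}) : (2 : ℝ) ≤ Ideal.absNorm p.1 := by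
    exact_mod_cast two_le_absNorm_of_prime p.2
  have hs₀ : s ≠ 0 := by positivity
  have prime_le_half (p : Ideal (𝓞 K)) (hp : Prime p) : |absNormRpowNeg (𝓞 K) hs₀ p| ≤ 1 / 2 :=
    abs_rpow_neg_le_half (two_le ⟨p, hp⟩) hs.le
  have sq_le (p : {p : Ideal (𝓞 K) // Prime p}) :
      absNormRpowNeg (𝓞 K) hs₀ p ^ 2 ≤ (Ideal.absNorm p.1 : ℝ) ^ (-2 : ℝ) :=
    rpow_neg_sq_le (one_le_two.trans (two_le p)) hs.le
  have summable_two := (summable_absNorm_rpow_neg K one_lt_two).subtype Prime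
  refine (abs_tsum_prime_sub_log_tsum_le (summable_absNorm_rpow_neg K hs) prime_le_half).trans ?_
  gcongr
  exact (summable_two.of_nonneg_of_le (fun p ↦ sq_nonneg _) sq_le).tsum_le_tsum sq_le summable_two

theorem isBigO_primeZeta_add_log_sub_one :
    (fun s ↦ primeZeta K s + Real.log (s - 1)) =O[𝓝[>] 1] (1 : ℝ → ℝ) := by
  let Z (s : ℝ) := ∑' I : Ideal (𝓞 K), (Ideal.absNorm I : ℝ) ^ (-s)
  have residue : Tendsto (fun s ↦ (s - 1) * Z s) (𝓝[>] 1) (𝓝 (dedekindZeta_residue K)) :=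
    tendsto_sub_one_mul_tsum_absNorm_rpow_neg K
  have log_residue : (fun s ↦ Real.log ((s - 1) * Z s)) =O[𝓝[>] 1] (1 : ℝ → ℝ) :=
    (residue.log (dedekindZeta_residue_ne_zero K)).isBigO_one ℝ
  have log_euler : (fun s ↦ primeZeta K s - Real.log (Z s)) =O[𝓝[>] 1] (1 : ℝ → ℝ) := by
    refine .of_bound (2 * primeZeta K 2) ?_
    filter_upwards [self_mem_nhdsWithin] with s hs
    simpa using abs_primeZeta_sub_log_tsum_le K hs
  refine (log_euler.add log_residue).congr' ?_ .rfl
  filter_upwards [residue.eventually_ne (dedekindZeta_residue_ne_zero K)] with s h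
  rw [Real.log_mul (left_ne_zero_of_mul h) (right_ne_zero_of_mul h)]
  ring

end PrimeZeta

section Truncation

lemma abs_ite_sub_le {t : ℝ} (ht₀ : 0 ≤ t) (ht₁ : t ≤ 1) :
    |(if Real.exp (-1) ≤ t then 1 else 0) - t| ≤ 3 * (t - t ^ 2) := by
  have third_le : 1 / 3 ≤ Real.exp (-1) := by linarith [Real.exp_neg_one_gt_d9]
  have le_two_thirds : Real.exp (-1) ≤ 2 / 3 := by linarith [Real.exp_neg_one_lt_d9]
  split_ifs with h
  · rw [abs_of_nonneg (by linarith)]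
    nlinarith
  · rw [abs_of_nonpos (by linarith)]
    nlinarith

lemma exp_neg_one_le_rpow_neg_inv_log_iff {x y : ℝ} (hx : 1 < x) (hy : 0 < y) :
    Real.exp (-1) ≤ y ^ (-(Real.log x)⁻¹) ↔ y ≤ x := by
  have hx₀ : 0 < x := by positivity
  have := Real.log_pos hx
  rw [Real.exp_neg, ← Real.rpow_inv_log hx₀ hx.ne', ← Real.rpow_neg hx₀.le,
    Real.rpow_le_rpow_iff_of_neg hx₀ hy (by simpa)]

variable {ι : Type*} {N : ι → ℝ}

lemma abs_truncated_inv_sub_rpow_le {x y : ℝ} (hx : 1 < x) (hy : 1 ≤ y) :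
    |(if y ≤ x then y⁻¹ else 0) - y ^ (-(1 + (Real.log x)⁻¹))| ≤
      3 * (y ^ (-(1 + (Real.log x)⁻¹)) - y ^ (-(1 + 2 * (Real.log x)⁻¹))) := by
  have hy₀ : 0 < y := by positivity
  have := Real.log_pos hx
  set t := y ^ (-(Real.log x)⁻¹) with ht
  have rpow_one : y ^ (-(1 + (Real.log x)⁻¹)) = y⁻¹ * t := by
    rw [neg_add, Real.rpow_add hy₀, Real.rpow_neg_one]
  have rpow_two : y ^ (-(1 + 2 * (Real.log x)⁻¹)) = y⁻¹ * t ^ 2 := by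
    rw [neg_add, Real.rpow_add hy₀, Real.rpow_neg_one, ht, ← Real.rpow_mul_natCast hy₀.le]
    push_cast
    ring_nf
  have t_le_one : t ≤ 1 := Real.rpow_le_one_of_one_le_of_nonpos hy (by simpa using this.le)
  have truncation : (if y ≤ x then y⁻¹ else 0) = y⁻¹ * if Real.exp (-1) ≤ t then 1 else 0 := by
    simp only [ht, exp_neg_one_le_rpow_neg_inv_log_iff hx hy₀, mul_ite, mul_one, mul_zero]
  rw [truncation, rpow_one, rpow_two, ← mul_sub, ← mul_sub, abs_mul, abs_of_pos (inv_pos.mpr hy₀),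
    mul_left_comm]
  gcongr
  exact abs_ite_sub_le (by positivity) t_le_one

lemma summable_truncated_inv (hN : ∀ i, 0 < N i) (h : Summable fun i ↦ N i ^ (-2 : ℝ)) (x : ℝ) :
    Summable fun i ↦ if N i ≤ x then (N i)⁻¹ else 0 := by
  refine (h.mul_left |x|).of_nonneg_of_le (fun i ↦ ?_) fun i ↦ ?_
  all_goals have := hN i
  · positivity
  · split_ifs with hx
    · calc (N i)⁻¹ = N i * N i ^ (-2 : ℝ) := by
            rw [← Real.rpow_one_add' this.le (by norm_num), ← Real.rpow_neg_one]
            norm_num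
        _ ≤ |x| * N i ^ (-2 : ℝ) := by gcongr; exact hx.trans (le_abs_self x)
    · positivity

lemma abs_tsum_truncated_inv_sub_tsum_rpow_le (hN : ∀ i, 1 ≤ N i)
    (h : ∀ s : ℝ, 1 < s → Summable fun i ↦ N i ^ (-s)) {x : ℝ} (hx : 1 < x) :
    |∑' i, (if N i ≤ x then (N i)⁻¹ else 0) - ∑' i, N i ^ (-(1 + (Real.log x)⁻¹))| ≤
      3 * (∑' i, N i ^ (-(1 + (Real.log x)⁻¹)) - ∑' i, N i ^ (-(1 + 2 * (Real.log x)⁻¹))) := by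
  have := Real.log_pos hx
  have summable_one := h (1 + (Real.log x)⁻¹) (by simpa)
  have summable_two := h (1 + 2 * (Real.log x)⁻¹) (by simpa)
  have summable_truncated :=
    summable_truncated_inv (fun i ↦ zero_lt_one.trans_le (hN i)) (h 2 one_lt_two) x
  rw [← summable_truncated.tsum_sub summable_one,
    ← summable_one.tsum_sub summable_two, ← tsum_mul_left]
  exact tsum_of_norm_bounded ((summable_one.sub summable_two).mul_left 3).hasSum
    fun i ↦ Real.norm_eq_abs _ ▸ abs_truncated_inv_sub_rpow_le hx (hN i)

lemma tendsto_one_add_mul_inv_log {c : ℝ} (hc : 0 < c) :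
    Tendsto (fun x ↦ 1 + c * (Real.log x)⁻¹) atTop (𝓝[>] 1) := by
  refine tendsto_nhdsWithin_iff.mpr ⟨?_, ?_⟩
  · simpa using (Real.tendsto_log_atTop.inv_tendsto_atTop.const_mul c).const_add 1
  · filter_upwards [eventually_gt_atTop 1] with x hx
    have := Real.log_pos hx
    simp only [Set.mem_Ioi, lt_add_iff_pos_right]
    positivity

lemma isBigO_sub_log_log {F : ℝ → ℝ}
    (hF : (fun s ↦ F s + Real.log (s - 1)) =O[𝓝[>] 1] (1 : ℝ → ℝ)) {c : ℝ} (hc : 0 < c) :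
    (fun x ↦ F (1 + c * (Real.log x)⁻¹) - Real.log (Real.log x)) =O[atTop] (1 : ℝ → ℝ) := by
  have log_const : (fun _ ↦ Real.log c) =O[atTop] (1 : ℝ → ℝ) := isBigO_const_const _ one_ne_zero _
  refine ((hF.comp_tendsto (tendsto_one_add_mul_inv_log hc)).sub log_const).congr' ?_ .rfl
  filter_upwards [eventually_gt_atTop 1] with x hx
  have := Real.log_pos hx
  simp only [Function.comp_apply, add_sub_cancel_left]
  rw [Real.log_mul hc.ne' (by positivity), Real.log_inv]
  ring

theorem isBigO_tsum_truncated_inv_sub_log_log (hN : ∀ i, 1 ≤ N i)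
    (h : ∀ s : ℝ, 1 < s → Summable fun i ↦ N i ^ (-s))
    (h_log : (fun s : ℝ ↦ ∑' i, N i ^ (-s) + Real.log (s - 1)) =O[𝓝[>] 1] (1 : ℝ → ℝ)) :
    (fun x ↦ ∑' i, (if N i ≤ x then (N i)⁻¹ else 0) - Real.log (Real.log x)) =O[atTop]
      (1 : ℝ → ℝ) := by
  have at_one := isBigO_sub_log_log h_log one_pos
  have at_two := isBigO_sub_log_log h_log two_pos
  simp only [one_mul] at at_one
  have truncation : (fun x ↦ ∑' i, (if N i ≤ x then (N i)⁻¹ else 0) -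
      ∑' i, N i ^ (-(1 + (Real.log x)⁻¹))) =O[atTop] (1 : ℝ → ℝ) := by
    refine .trans (.of_bound 3 ?_) (at_one.sub at_two)
    filter_upwards [eventually_gt_atTop 1] with x hx
    rw [sub_sub_sub_cancel_right]
    refine (abs_tsum_truncated_inv_sub_tsum_rpow_le hN h hx).trans ?_
    gcongr
    exact le_abs_self _
  exact (truncation.add at_one).congr_left fun x ↦ sub_add_sub_cancel _ _ _

lemma monotone_tsum_truncated_inv (hN : ∀ i, 0 < N i) (h : Summable fun i ↦ N i ^ (-2 : ℝ)) :
    Monotone fun x ↦ ∑' i, if N i ≤ x then (N i)⁻¹ else 0 := by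
  intro x y hxy
  refine (summable_truncated_inv hN h x).tsum_le_tsum (fun i ↦ ?_) (summable_truncated_inv hN h y)
  have := inv_pos.mpr (hN i)
  split_ifs <;> grind

lemma exists_abs_sub_le_of_monotoneOn {f g : ℝ → ℝ} {a : ℝ} (hf : MonotoneOn f (Set.Ici a))
    (hg : MonotoneOn g (Set.Ici a)) (h : (fun x ↦ f x - g x) =O[atTop] (1 : ℝ → ℝ)) :
    ∃ C, 0 < C ∧ ∀ x, a ≤ x → |f x - g x| ≤ C := by
  obtain ⟨C, hC, bound⟩ := h.exists_pos
  obtain ⟨b, hb⟩ := (bound.bound.and (eventually_ge_atTop a)).exists_forall_of_atTop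
  refine ⟨C + |f a - g b| + |f b - g a|, by positivity, fun x hx ↦ ?_⟩
  have ha := Set.self_mem_Ici (a := a)
  have hab : a ≤ b := (hb b le_rfl).2
  rcases le_total b x with hbx | hxb
  · have : |f x - g x| ≤ C := by simpa using (hb x hbx).1
    linarith [abs_nonneg (f a - g b), abs_nonneg (f b - g a)]
  · have lower : f a - g b ≤ f x - g x := sub_le_sub (hf ha hx hx) (hg hx hab hxb)
    have upper : f x - g x ≤ f b - g a := sub_le_sub (hf hx hab hxb) (hg ha hx hx)
    linarith [abs_le_max_abs_abs lower upper, max_le_add_of_nonneg (abs_nonneg (f a - g b))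
      (abs_nonneg (f b - g a))]

lemma monotoneOn_log_log : MonotoneOn (fun x ↦ Real.log (Real.log x)) (Set.Ioi 1) :=
  fun _ hx _ _ hxy ↦ Real.log_le_log (Real.log_pos hx)
    (Real.log_le_log (zero_lt_one.trans hx) hxy)

end Truncation

-- The zero ideal contributes `1 / 0 = 0` to the left-hand side.
theorem tsum_isPrime_absNorm_eq_tsum_prime {R : Type*} [CommRing R] [IsDedekindDomain R]
    [Module.Free ℤ R] (x : ℝ) :
    ∑' q : Ideal R,
        (if q.IsPrime ∧ (Ideal.absNorm q : ℝ) ≤ x then 1 / (Ideal.absNorm q : ℝ) else 0) =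
      ∑' p : {p : Ideal R // Prime p},
        if (Ideal.absNorm p.1 : ℝ) ≤ x then (Ideal.absNorm p.1 : ℝ)⁻¹ else 0 := by
  have support_subset : Function.support (fun q : Ideal R ↦ if q.IsPrime ∧
      (Ideal.absNorm q : ℝ) ≤ x then 1 / (Ideal.absNorm q : ℝ) else 0) ⊆
        Set.range (Subtype.val : {p : Ideal R // Prime p} → Ideal R) := by
    intro q hq
    obtain ⟨hq_prime, -, absNorm_ne_zero⟩ := by simpa using hq
    have ne_bot : q ≠ ⊥ := fun h ↦ absNorm_ne_zero (h ▸ Ideal.absNorm_bot)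
    exact ⟨⟨q, Ideal.prime_of_isPrime ne_bot hq_prime⟩, rfl⟩
  rw [← Subtype.val_injective.tsum_eq support_subset]
  exact tsum_congr fun p ↦ by simp only [Ideal.isPrime_of_prime p.2, true_and, one_div]

end Mertens

open Mertens in
/-- Mertens' estimate for number fields. -/
theorem mertens_number_field (K : Type*) [Field K] [NumberField K] :
    ∃ C : ℝ, 0 < C ∧ ∀ x : ℝ, 3 ≤ x →
      |(∑' q : Ideal (𝓞 K),
          (if q.IsPrime ∧ (Ideal.absNorm q : ℝ) ≤ x
           then 1 / (Ideal.absNorm q : ℝ) else 0)) - Real.log (Real.log x)| ≤ C := by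
  let N (p : {p : Ideal (𝓞 K) // Prime p}) : ℝ := Ideal.absNorm p.1
  have one_le_N (p) : 1 ≤ N p :=
    Nat.one_le_cast.mpr (one_le_two.trans (two_le_absNorm_of_prime p.2))
  have summable_N (s : ℝ) (hs : 1 < s) : Summable fun p ↦ N p ^ (-s) :=
    (summable_absNorm_rpow_neg K hs).subtype _
  have asymptotic := isBigO_tsum_truncated_inv_sub_log_log one_le_N summable_N
    (isBigO_primeZeta_add_log_sub_one K)
  have monotone_sum := monotone_tsum_truncated_inv (fun p ↦ zero_lt_one.trans_le (one_le_N p))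
    (summable_N 2 one_lt_two)
  have monotone_log_log := monotoneOn_log_log.mono
    (Set.Ici_subset_Ioi.mpr (by norm_num : (1 : ℝ) < 3))
  simp only [tsum_isPrime_absNorm_eq_tsum_prime]
  exact exists_abs_sub_le_of_monotoneOn (monotone_sum.monotoneOn _) monotone_log_log asymptotic
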